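/- arXiv:1910.04259 — 2 statements merged into one kernel-verified Lean document; each statement's English description precedes it below -/
import Mathlib

section
/- Let ℰ = {ε_p(j), j ∈ [p]} be a Gaussian triangular array with standard Normal marginals, u_p = Φ^{←}(1 − 1/p), and suppose P(|max_{j∈[p]} ε_p(j)/u_p − 1| > δ_p) → 0 for some positive sequence δ_p → 0. Let f: ℝ → ℝ be an even function (f(x) = f(−x)), differentiable, eventually strictly increasing, monotone non-decreasing on (0, ∞), with lim_{x→∞} f(x) ≠ 0, and with f′ eventually increasing or eventually decreasing as x → ∞. Set η_p(j) := f(ε_p(j)) and v_p := f(u_p). Then for every sequence d_p with d_p ≥ d_p* := u_p δ_p · max{|f′(u_p(1−δ_p))|, |f′(u_p(1+δ_p))|} / |f(u_p)|, one has P(|max_{j∈[p]} η_p(j)/v_p − 1| > d_p) → 0 as p → ∞. -/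
open MeasureTheory ProbabilityTheory Filter Topology

/-- The standard Normal cumulative distribution function `Φ`. -/
noncomputable def stdGaussianCDF (u : ℝ) : ℝ :=
  ∫ x in Set.Iic u, Real.exp (-x ^ 2 / 2) / Real.sqrt (2 * Real.pi)

/-- The generalized inverse (quantile function) `Φ^{←}` of the standard Normal cdf. -/
noncomputable def stdGaussianQuantile (y : ℝ) : ℝ :=
  sInf {x : ℝ | y ≤ stdGaussianCDF x}

/-- `u_p = Φ^{←}(1 - 1/p)`. -/
noncomputable def uQuantile (p : ℕ) : ℝ :=
  stdGaussianQuantile (1 - 1 / (p : ℝ))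

/-- A finite family of random variables is jointly Gaussian if every linear
combination is Gaussian. -/
def IsJointGaussian {Ω : Type*} [MeasureSpace Ω] {ι : Type*} [Fintype ι]
    (X : ι → Ω → ℝ) : Prop :=
  ∀ c : ι → ℝ, ∃ m : ℝ, ∃ v : NNReal,
    MeasureTheory.Measure.map (fun ω => ∑ i, c i * X i ω) ℙ =
      ProbabilityTheory.gaussianReal m v

/-!
For even `f` nondecreasing on `[0, ∞)`, `max f(ε_p(j)) = f (max |ε_p(j)|)`. Since the array is
centred and Gaussian, `-ε_p` has the law of `ε_p`, so `max (-ε_p(j))` concentrates around `u_p` at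
the same rate as `max ε_p(j)`, and hence so does the larger of the two, `max |ε_p(j)|`. The result
is then a delta method: `f'` is monotone on `[u_p (1 - δ_p), u_p (1 + δ_p)]` for large `p`, so
`|f'|` is at most the larger of its values at the endpoints, and the mean value inequality turns a
relative error `δ_p` of the argument into the relative error `d_p*` of the value.
-/

section Quantile

lemma tendsto_sInf_setOf_le_nhdsLT_atTop {α β : Type*} [ConditionallyCompleteLinearOrder α]
    [LinearOrder β] [TopologicalSpace β] [OrderTopology β] {F : α → β} {c : β}
    (hmono : Monotone F) (hlt : ∀ x, F x < c) (hlim : Tendsto F atTop (𝓝 c)) :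
    Tendsto (fun y => sInf {x | y ≤ F x}) (𝓝[<] c) atTop := by
  refine tendsto_atTop.2 fun K => ?_
  have : Nonempty α := ⟨K⟩
  filter_upwards [Ioo_mem_nhdsLT (hlt K)] with y ⟨hKy, hyc⟩
  refine le_csInf ((hlim.eventually_const_le hyc).exists) fun x hyx => ?_
  exact (hmono.reflect_lt (hKy.trans_le hyx)).le

lemma cdf_lt_one {μ : Measure ℝ} [IsProbabilityMeasure μ] [μ.IsOpenPosMeasure] (x : ℝ) :
    cdf μ x < 1 := by
  have hpos : 0 < μ.real (Set.Ioi x) :=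
    ENNReal.toReal_pos (isOpen_Ioi.measure_pos μ Set.nonempty_Ioi).ne' (measure_ne_top _ _)
  rw [← Set.compl_Iic, probReal_compl_eq_one_sub measurableSet_Iic, ← cdf_eq_real] at hpos
  linarith

lemma stdGaussianCDF_eq_cdf : stdGaussianCDF = cdf (gaussianReal 0 1) := by
  funext x
  rw [cdf_eq_real, Measure.real, gaussianReal_apply_eq_integral _ one_ne_zero,
    ENNReal.toReal_ofReal
      (setIntegral_nonneg measurableSet_Iic fun y _ => gaussianPDFReal_nonneg _ _ _),
    stdGaussianCDF]
  refine setIntegral_congr_fun measurableSet_Iic fun y _ => ?_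
  simp [gaussianPDFReal, div_eq_inv_mul]

lemma tendsto_stdGaussianQuantile_nhdsLT_one :
    Tendsto stdGaussianQuantile (𝓝[<] 1) atTop := by
  have : (gaussianReal 0 1).IsOpenPosMeasure :=
    (gaussianReal_absolutelyContinuous' 0 one_ne_zero).isOpenPosMeasure
  refine tendsto_sInf_setOf_le_nhdsLT_atTop ?_ ?_ ?_ <;> rw [stdGaussianCDF_eq_cdf]
  · exact monotone_cdf _
  · exact cdf_lt_one
  · exact tendsto_cdf_atTop _

lemma tendsto_uQuantile_atTop : Tendsto uQuantile atTop atTop := by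
  refine tendsto_stdGaussianQuantile_nhdsLT_one.comp (tendsto_nhdsWithin_iff.2 ⟨?_, ?_⟩)
  · simpa using (tendsto_one_div_atTop_nhds_zero_nat (𝕜 := ℝ)).const_sub 1
  · filter_upwards [eventually_gt_atTop 0] with p hp
    exact sub_lt_self (1 : ℝ) (by positivity)

end Quantile

section GaussianSymmetry

lemma identDistrib_neg_of_hasGaussianLaw {Ω E : Type*} [MeasurableSpace Ω] {P : Measure Ω}
    [NormedAddCommGroup E] [NormedSpace ℝ E] [CompleteSpace E] [SecondCountableTopology E]
    [MeasurableSpace E] [BorelSpace E] {X : Ω → E} (hX : HasGaussianLaw X P) (hmean : P[X] = 0) :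
    IdentDistrib X (-X) P P := by
  have := hX.isProbabilityMeasure
  have := Measure.isProbabilityMeasure_map (μ := P) hX.aemeasurable
  have := Measure.isProbabilityMeasure_map (μ := P) hX.neg.aemeasurable
  refine ⟨hX.aemeasurable, hX.neg.aemeasurable, Measure.ext_of_charFunDual (funext fun L => ?_)⟩
  have hneg : L ∘ (-X) = -(L ∘ X) := funext fun ω => map_neg L (X ω)
  have hLX : ∫ ω, (L ∘ X) ω ∂P = 0 := by
    simpa [hmean] using L.integral_comp_comm hX.integrable
  rw [hX.charFunDual_map_eq, hX.neg.charFunDual_map_eq, hneg, variance_neg, integral_neg', hLX,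
    neg_zero]

lemma integral_eq_of_map_eq_gaussianReal {Ω : Type*} [MeasurableSpace Ω] {P : Measure Ω}
    {Y : Ω → ℝ} {m : ℝ} {v : NNReal} (hmeas : AEMeasurable Y P)
    (hY : P.map Y = gaussianReal m v) : ∫ ω, Y ω ∂P = m :=
  calc ∫ ω, Y ω ∂P = ∫ y, y ∂(P.map Y) := (integral_map hmeas aestronglyMeasurable_id).symm
    _ = m := by rw [hY, integral_id_gaussianReal]

variable {Ω ι : Type*} [MeasureSpace Ω] [Fintype ι] {X : ι → Ω → ℝ}

lemma IsJointGaussian.hasGaussianLaw (hX : IsJointGaussian X) (hmeas : ∀ i, AEMeasurable (X i)) :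
    HasGaussianLaw (fun ω i => X i ω) ℙ where
  isGaussian_map := by
    classical
    refine isGaussian_of_map_eq_gaussianReal fun L => ?_
    obtain ⟨m, v, hmv⟩ := hX fun i => L (Pi.single i 1)
    refine ⟨m, v, ?_⟩
    rw [AEMeasurable.map_map_of_aemeasurable (by fun_prop) (aemeasurable_pi_lambda _ hmeas), ← hmv]
    congr 1 with ω
    rw [Function.comp_apply, pi_eq_sum_univ' (fun i => X i ω), map_sum]
    simp only [map_smul, smul_eq_mul, mul_comm]

lemma IsJointGaussian.identDistrib_neg (hX : IsJointGaussian X)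
    (hmeas : ∀ i, AEMeasurable (X i)) (hmean : ∀ i, ∫ ω, X i ω = 0) :
    IdentDistrib (fun ω i => X i ω) (fun ω i => -X i ω) := by
  have hlaw := hX.hasGaussianLaw hmeas
  refine identDistrib_neg_of_hasGaussianLaw hlaw (funext fun i => ?_)
  rw [eval_integral (fun i => hlaw.integrable.eval i), hmean, Pi.zero_apply]

end GaussianSymmetry

section RelativeError

/-- The rate `d_p* = u_p δ_p max{|f'(u_p(1-δ_p))|, |f'(u_p(1+δ_p))|}/|f(u_p)|` of the theorem: the
first-order bound on the relative error of `f u` caused by a relative error `δ` in `u`. -/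
noncomputable def deltaMethodRate (f : ℝ → ℝ) (u δ : ℝ) : ℝ :=
  u * δ * max |deriv f (u * (1 - δ))| |deriv f (u * (1 + δ))| / |f u|

lemma abs_div_sub_one_le_iff {x u δ : ℝ} (hu : 0 < u) :
    |x / u - 1| ≤ δ ↔ x ∈ Set.Icc (u * (1 - δ)) (u * (1 + δ)) := by
  rw [div_sub_one hu.ne', abs_div, abs_of_pos hu, div_le_iff₀ hu, abs_le, Set.mem_Icc]
  constructor <;> rintro ⟨h₁, h₂⟩ <;> constructor <;> linarith

lemma abs_le_max_abs_abs_of_monotoneOn_or_antitoneOn {α β : Type*} [Preorder α] [AddCommGroup β]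
    [LinearOrder β] [IsOrderedAddMonoid β] {g : α → β} {a b x : α}
    (hg : MonotoneOn g (Set.Icc a b) ∨ AntitoneOn g (Set.Icc a b)) (hx : x ∈ Set.Icc a b) :
    |g x| ≤ max |g a| |g b| := by
  have hab : a ≤ b := hx.1.trans hx.2
  have ha : a ∈ Set.Icc a b := Set.left_mem_Icc.2 hab
  have hb : b ∈ Set.Icc a b := Set.right_mem_Icc.2 hab
  rcases hg with h | h
  · exact abs_le_max_abs_abs (h ha hx hx.1) (h hx hb hx.2)
  · exact max_comm |g a| |g b| ▸ abs_le_max_abs_abs (h hx hb hx.2) (h ha hx hx.1)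

variable {f : ℝ → ℝ}

lemma abs_sub_le_max_abs_deriv_mul {a b x y : ℝ}
    (hdiff : ∀ z ∈ Set.Icc a b, DifferentiableAt ℝ f z)
    (hderiv : MonotoneOn (deriv f) (Set.Icc a b) ∨ AntitoneOn (deriv f) (Set.Icc a b))
    (hx : x ∈ Set.Icc a b) (hy : y ∈ Set.Icc a b) :
    |f y - f x| ≤ max |deriv f a| |deriv f b| * |y - x| :=
  (convex_Icc a b).norm_image_sub_le_of_norm_deriv_le hdiff
    (fun _ hz => abs_le_max_abs_abs_of_monotoneOn_or_antitoneOn hderiv hz) hx hy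

lemma abs_comp_div_sub_one_le {u δ x : ℝ} (hu : 0 < u)
    (hdiff : ∀ z ∈ Set.Icc (u * (1 - δ)) (u * (1 + δ)), DifferentiableAt ℝ f z)
    (hderiv : MonotoneOn (deriv f) (Set.Icc (u * (1 - δ)) (u * (1 + δ))) ∨
      AntitoneOn (deriv f) (Set.Icc (u * (1 - δ)) (u * (1 + δ))))
    (hfu : f u ≠ 0) (hx : |x / u - 1| ≤ δ) :
    |f x / f u - 1| ≤ deltaMethodRate f u δ := by
  have hu_mem : u ∈ Set.Icc (u * (1 - δ)) (u * (1 + δ)) :=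
    (abs_div_sub_one_le_iff hu).1 (by simpa [hu.ne'] using (abs_nonneg _).trans hx)
  have hxu : |x - u| ≤ u * δ := by
    rwa [div_sub_one hu.ne', abs_div, abs_of_pos hu, div_le_iff₀' hu] at hx
  rw [div_sub_one hfu, abs_div, deltaMethodRate]
  gcongr
  calc |f x - f u|
      ≤ max |deriv f (u * (1 - δ))| |deriv f (u * (1 + δ))| * |x - u| :=
        abs_sub_le_max_abs_deriv_mul hdiff hderiv hu_mem ((abs_div_sub_one_le_iff hu).1 hx)
    _ ≤ max |deriv f (u * (1 - δ))| |deriv f (u * (1 + δ))| * (u * δ) := by gcongr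
    _ = u * δ * max |deriv f (u * (1 - δ))| |deriv f (u * (1 + δ))| := mul_comm _ _

end RelativeError

section EvenFunction

lemma monotoneOn_Ici_of_Ioi {α β : Type*} [LinearOrder α] [TopologicalSpace α] [OrderTopology α]
    [DenselyOrdered α] [NoMaxOrder α] [LinearOrder β] [TopologicalSpace β]
    [OrderClosedTopology β] {f : α → β} {a : α} (hf : MonotoneOn f (Set.Ioi a))
    (hcont : ContinuousWithinAt f (Set.Ioi a) a) : MonotoneOn f (Set.Ici a) := by
  rw [← Set.Ioi_insert]
  exact hf.insert_of_continuousWithinAt (nhdsGT_neBot a) hcont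

lemma ciSup_abs_eq_max {ι : Type*} [Finite ι] (x : ι → ℝ) :
    ⨆ i, |x i| = max (⨆ i, x i) (⨆ i, -x i) := by
  rcases isEmpty_or_nonempty ι
  · simp
  · exact ciSup_sup_eq (Set.finite_range _).bddAbove (Set.finite_range _).bddAbove

lemma iSup_comp_eq_comp_iSup_abs {ι β : Type*} [Finite ι] [Nonempty ι]
    [ConditionallyCompleteLinearOrder β] {f : ℝ → β} (heven : f.Even)
    (hmono : MonotoneOn f (Set.Ici 0)) (x : ι → ℝ) : ⨆ i, f (x i) = f (⨆ i, |x i|) := by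
  have hf_abs : ∀ y, f |y| = f y := fun y => by
    rcases abs_choice y with h | h <;> simp only [h, heven.eq]
  have hle : ∀ i, |x i| ≤ ⨆ j, |x j| := le_ciSup (Set.finite_range _).bddAbove
  obtain ⟨j, hj⟩ := exists_eq_ciSup_of_finite (f := fun i => |x i|)
  apply le_antisymm
  · refine ciSup_le fun i => hf_abs (x i) ▸ ?_
    exact hmono (Set.mem_Ici.2 (abs_nonneg _)) ((abs_nonneg _).trans (hle i)) (hle i)
  · rw [← hj, hf_abs]
    exact le_ciSup (f := fun i => f (x i)) (Set.finite_range _).bddAbove j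

lemma eventually_ne_of_injOn_Ici {α β : Type*} [LinearOrder α] [NoMaxOrder α] {f : α → β} {M : α}
    (hf : Set.InjOn f (Set.Ici M)) (c : β) : ∀ᶠ x in atTop, f x ≠ c := by
  by_cases h : ∃ z ∈ Set.Ici M, f z = c
  · obtain ⟨z, hz, rfl⟩ := h
    filter_upwards [eventually_gt_atTop z] with x hx
    exact hf.ne (le_trans hz hx.le) hz hx.ne'
  · filter_upwards [eventually_ge_atTop M] with x hx hfx
    exact h ⟨x, hx, hfx⟩

end EvenFunction

section Concentration

variable {Ω α : Type*} [MeasurableSpace Ω] {μ : Measure Ω} {l : Filter α}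

/-- The random variables `Z a` are relatively stable with norming constants `u a` at rate `δ a`:
`μ(|Z a / u a - 1| > δ a) → 0` along `l`. For `Z a` the maximum of the `a`-th row of a triangular
array this is concentration of maxima at rate `δ`. On a nonmeasurable event `μ` is the outer
measure. -/
def ConcentratesAtRate (μ : Measure Ω) (l : Filter α) (Z : α → Ω → ℝ) (u δ : α → ℝ) : Prop :=
  Tendsto (fun a => μ {ω | δ a < |Z a ω / u a - 1|}) l (𝓝 0)

namespace ConcentratesAtRate

variable {Y Z : α → Ω → ℝ} {u v δ d : α → ℝ}

lemma congr_identDistrib (hY : ConcentratesAtRate μ l Y u δ)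
    (hYZ : ∀ a, IdentDistrib (Y a) (Z a) μ μ) : ConcentratesAtRate μ l Z u δ := by
  refine Tendsto.congr (fun a => ?_) hY
  have hevent : MeasurableSet {x : ℝ | δ a < |x / u a - 1|} := by measurability
  exact (hYZ a).measure_mem_eq hevent

lemma of_eventually_imp (hZ : ConcentratesAtRate μ l Z u δ)
    (h : ∀ᶠ a in l, ∀ ω, |Z a ω / u a - 1| ≤ δ a → |Y a ω / v a - 1| ≤ d a) :
    ConcentratesAtRate μ l Y v d := by
  refine tendsto_of_tendsto_of_tendsto_of_le_of_le' tendsto_const_nhds hZ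
    (Eventually.of_forall fun _ => zero_le) ?_
  filter_upwards [h] with a ha
  exact measure_mono fun ω hω => lt_of_not_ge fun hle => (ha ω hle).not_gt hω

protected lemma max (hY : ConcentratesAtRate μ l Y u δ) (hZ : ConcentratesAtRate μ l Z u δ) :
    ConcentratesAtRate μ l (fun a ω => max (Y a ω) (Z a ω)) u δ := by
  refine tendsto_of_tendsto_of_tendsto_of_le_of_le tendsto_const_nhds
    (by simpa using Tendsto.add hY hZ) (fun _ => zero_le) fun a => ?_
  refine (measure_mono ?_).trans (measure_union_le _ _)
  intro ω (hω : δ a < |max (Y a ω) (Z a ω) / u a - 1|)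
  rcases max_choice (Y a ω) (Z a ω) with h | h <;> rw [h] at hω
  · exact Or.inl hω
  · exact Or.inr hω

lemma iSup_abs {ι : α → Type*} [∀ a, Finite (ι a)] {X : (a : α) → ι a → Ω → ℝ}
    (hmax : ConcentratesAtRate μ l (fun a ω => ⨆ i, X a i ω) u δ)
    (hsymm : ∀ a, IdentDistrib (fun ω i => X a i ω) (fun ω i => -X a i ω) μ μ) :
    ConcentratesAtRate μ l (fun a ω => ⨆ i, |X a i ω|) u δ := by
  have hmax_neg : ConcentratesAtRate μ l (fun a ω => ⨆ i, -X a i ω) u δ :=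
    hmax.congr_identDistrib fun a =>
      have hsup : Measurable fun x : ι a → ℝ => ⨆ i, x i := .iSup measurable_pi_apply
      (hsymm a).comp hsup
  simpa only [ciSup_abs_eq_max] using hmax.max hmax_neg

lemma delta_method {f : ℝ → ℝ} (hZ : ConcentratesAtRate μ l Z u δ)
    (hu : Tendsto u l atTop) (hδ : Tendsto δ l (𝓝 0))
    (hf_ne : ∀ᶠ x in atTop, f x ≠ 0) (hf_diff : ∀ᶠ x in atTop, DifferentiableAt ℝ f x)
    (hf_deriv : ∃ M, MonotoneOn (deriv f) (Set.Ici M) ∨ AntitoneOn (deriv f) (Set.Ici M))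
    (hd : ∀ᶠ a in l, deltaMethodRate f (u a) (δ a) ≤ d a) :
    ConcentratesAtRate μ l (fun a ω => f (Z a ω)) (fun a => f (u a)) d := by
  obtain ⟨M, hM⟩ := hf_deriv
  obtain ⟨N, hN⟩ := eventually_atTop.1 hf_diff
  have hlow : Tendsto (fun a => u a * (1 - δ a)) l atTop :=
    hu.atTop_mul_pos one_pos (by simpa using hδ.const_sub 1)
  refine hZ.of_eventually_imp ?_
  filter_upwards [hu.eventually_gt_atTop 0, hu.eventually hf_ne, hlow.eventually_ge_atTop M,
    hlow.eventually_ge_atTop N, hd] with a hu_pos hfu hlow_M hlow_N hda ω hω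
  have hsub : Set.Icc (u a * (1 - δ a)) (u a * (1 + δ a)) ⊆ Set.Ici M :=
    fun z hz => hlow_M.trans hz.1
  exact (abs_comp_div_sub_one_le hu_pos (fun z hz => hN z (hlow_N.trans hz.1))
    (hM.imp (·.mono hsub) (·.mono hsub)) hfu hω).trans hda

end ConcentratesAtRate

end Concentration

theorem concentration_even_function_general {Ω α : Type*} [MeasurableSpace Ω] {μ : Measure Ω}
    {l : Filter α} {ι : α → Type*} [∀ a, Finite (ι a)] (hι : ∀ᶠ a in l, Nonempty (ι a))
    {X : (a : α) → ι a → Ω → ℝ} {u δ d : α → ℝ} {f : ℝ → ℝ}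
    (habs : ConcentratesAtRate μ l (fun a ω => ⨆ i, |X a i ω|) u δ)
    (hu : Tendsto u l atTop) (hδ : Tendsto δ l (𝓝 0))
    (hf_even : f.Even) (hf_mono : MonotoneOn f (Set.Ici 0))
    (hf_ne : ∀ᶠ x in atTop, f x ≠ 0) (hf_diff : ∀ᶠ x in atTop, DifferentiableAt ℝ f x)
    (hf_deriv : ∃ M, MonotoneOn (deriv f) (Set.Ici M) ∨ AntitoneOn (deriv f) (Set.Ici M))
    (hd : ∀ᶠ a in l, deltaMethodRate f (u a) (δ a) ≤ d a) :
    ConcentratesAtRate μ l (fun a ω => ⨆ i, f (X a i ω)) (fun a => f (u a)) d := by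
  refine (habs.delta_method hu hδ hf_ne hf_diff hf_deriv hd).of_eventually_imp ?_
  filter_upwards [hι] with a _ ω hω
  rwa [iSup_comp_eq_comp_iSup_abs hf_even hf_mono]

/-- Concentration of maxima for even functions of a Gaussian array: if
`P(|max ε_p(i)/u_p - 1| > δ_p) → 0` and `f` is even, differentiable, eventually strictly
increasing, non-decreasing on `(0,∞)`, with limit at `+∞` different from `0` and eventually
monotone derivative, then `P(|max f(ε_p(i))/f(u_p) - 1| > d_p) → 0` for every `d_p`
dominating `d_p* = u_p δ_p max{|f'(u_p(1-δ_p))|, |f'(u_p(1+δ_p))|}/|f(u_p)|`. -/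
theorem concentration_even_function
    {Ω : Type*} [MeasureSpace Ω] [IsProbabilityMeasure (ℙ : Measure Ω)]
    (ε : (p : ℕ) → Fin p → Ω → ℝ)
    (hmeas : ∀ p i, Measurable (ε p i))
    (hGauss : ∀ p, IsJointGaussian (ε p))
    (hmarg : ∀ p i, Measure.map (ε p i) ℙ = gaussianReal 0 1)
    (δ : ℕ → ℝ) (hδ_pos : ∀ p, 0 < δ p) (hδ0 : Tendsto δ atTop (𝓝 0))
    (hconc : Tendsto (fun p : ℕ =>
        ℙ {ω | δ p < |(⨆ i : Fin p, ε p i ω) / uQuantile p - 1|}) atTop (𝓝 0))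
    (f : ℝ → ℝ)
    (hf_even : ∀ x, f x = f (-x))
    (hf_diff : Differentiable ℝ f)
    (hf_strict : ∃ M : ℝ, StrictMonoOn f (Set.Ici M))
    (hf_mono_pos : MonotoneOn f (Set.Ioi (0 : ℝ)))
    (hf_lim : ¬ Tendsto f atTop (𝓝 0))
    (hf_deriv_mono : (∃ M : ℝ, MonotoneOn (deriv f) (Set.Ici M)) ∨
      (∃ M : ℝ, AntitoneOn (deriv f) (Set.Ici M)))
    (d : ℕ → ℝ)
    (hd : ∀ p : ℕ,
      uQuantile p * δ p *
          max |deriv f (uQuantile p * (1 - δ p))| |deriv f (uQuantile p * (1 + δ p))| /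
        |f (uQuantile p)| ≤ d p) :
    Tendsto (fun p : ℕ =>
        ℙ {ω | d p < |(⨆ i : Fin p, f (ε p i ω)) / f (uQuantile p) - 1|})
      atTop (𝓝 0) := by
  obtain ⟨M, hM⟩ := hf_strict
  have hmono : MonotoneOn f (Set.Ici 0) :=
    monotoneOn_Ici_of_Ioi hf_mono_pos (hf_diff 0).continuousAt.continuousWithinAt
  have hsymm : ∀ p, IdentDistrib (fun ω i => ε p i ω) (fun ω i => -ε p i ω) := fun p =>
    (hGauss p).identDistrib_neg (fun i => (hmeas p i).aemeasurable) fun i =>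
      integral_eq_of_map_eq_gaussianReal (hmeas p i).aemeasurable (hmarg p i)
  exact concentration_even_function_general
    ((eventually_gt_atTop 0).mono fun p hp => Fin.pos_iff_nonempty.1 hp)
    (ConcentratesAtRate.iSup_abs hconc hsymm) tendsto_uQuantile_atTop hδ0
    (fun x => (hf_even x).symm) hmono (eventually_ne_of_injOn_Ici hM.injOn 0)
    (.of_forall hf_diff) (exists_or.2 hf_deriv_mono) (.of_forall hd)
end

section
/- Let ℰ = {ε_p(i), i ∈ [p], p ∈ ℕ} be a Gaussian triangular array with standard Normal marginals such that for some ν > 0 and constant c > 0 independent of p there exist permutations π_p of {1,…,p} with |Cov(ε_p(i), ε_p(j))| ≤ c·(log |π_p(i) − π_p(j)|)^{−ν} for all distinct i, j ∈ [p] with |π_p(i) − π_p(j)| ≥ 2. Then ℰ is UDD and its UDD function satisfies N_ℰ(τ) = O(e^{(c/τ)^{1/ν}}) as τ → 0, i.e., there exists a constant C such that for all sufficiently small τ > 0 one may take N_ℰ(τ) ≤ C·e^{(c/τ)^{1/ν}}. -/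
open MeasureTheory ProbabilityTheory Filter Topology

/-- The covariance of two real random variables. -/
noncomputable def covar {Ω : Type*} [MeasureSpace Ω] (X Y : Ω → ℝ) : ℝ :=
  (∫ ω, X ω * Y ω ∂ℙ) - (∫ ω, X ω ∂ℙ) * (∫ ω, Y ω ∂ℙ)

lemma lt_exp_of_lt_mul_log_rpow_neg {ν c τ d : ℝ} (hν : 0 < ν) (hτ : 0 < τ) (hd : 1 < d)
    (h : τ < c * Real.log d ^ (-ν)) : d < Real.exp ((c / τ) ^ (1 / ν)) := by
  have hlog : 0 < Real.log d := Real.log_pos hd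
  have hpow : 0 < Real.log d ^ ν := Real.rpow_pos_of_pos hlog ν
  have hlt : Real.log d ^ ν < c / τ := by
    rwa [Real.rpow_neg hlog.le, ← div_eq_mul_inv, lt_div_comm₀ hτ hpow] at h
  rw [← Real.log_lt_iff_lt_exp (zero_lt_one.trans hd), one_div]
  exact (Real.lt_rpow_inv_iff_of_pos hlog.le (hpow.trans hlt).le hν).2 hlt

lemma dist_int_le_exp_of_lt_mul_log_rpow_neg {ν c τ : ℝ} (hν : 0 < ν) (hc : 0 ≤ c) (hτ : 0 < τ)
    {m n : ℤ} (h : 2 ≤ dist m n → τ < c * Real.log (dist m n) ^ (-ν)) :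
    dist m n ≤ Real.exp ((c / τ) ^ (1 / ν)) := by
  rcases lt_or_ge (dist m n) 2 with hnear | hfar
  · have hle_one : dist m n ≤ 1 := by
      rw [Int.dist_eq] at hnear ⊢
      norm_cast at hnear ⊢
      exact Int.lt_add_one_iff.1 hnear
    exact hle_one.trans (Real.one_le_exp (by positivity))
  · exact (lt_exp_of_lt_mul_log_rpow_neg hν hτ (one_lt_two.trans_le hfar) (h hfar)).le

lemma ncard_int_closedBall_le (m : ℤ) {r : ℝ} (hr : 0 ≤ r) :
    ((Metric.closedBall m r).ncard : ℝ) ≤ 2 * r + 1 := by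
  have hceil : (m : ℝ) - r ≤ ⌈(m : ℝ) - r⌉ := Int.le_ceil _
  have hfloor : (⌊(m : ℝ) + r⌋ : ℝ) ≤ m + r := Int.floor_le _
  have hle : ⌈(m : ℝ) - r⌉ ≤ ⌊(m : ℝ) + r⌋ + 1 :=
    (Int.ceil_le.2 (sub_le_self _ hr)).trans
      ((Int.le_floor.2 (le_add_of_nonneg_right hr)).trans (Int.le_add_one le_rfl))
  have hcard : ((Metric.closedBall m r).ncard : ℤ) = ⌊(m : ℝ) + r⌋ + 1 - ⌈(m : ℝ) - r⌉ := by
    rw [Int.closedBall_eq_Icc, ← Finset.coe_Icc, Set.ncard_coe_finset, Int.card_Icc_of_le _ _ hle]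
  calc ((Metric.closedBall m r).ncard : ℝ)
      = ⌊(m : ℝ) + r⌋ + 1 - ⌈(m : ℝ) - r⌉ := by exact_mod_cast hcard
    _ ≤ 2 * r + 1 := by linarith

/-- For the triangular array, `K` is the covariance kernel of one row. The bound does not depend on
the size of `ι`, which makes it uniform over the rows. -/
theorem UDD_of_logarithmic_covariance_decay_general {ι : Type*} (K : ι → ι → ℝ)
    {ν c : ℝ} (hν : 0 < ν) (hc : 0 ≤ c) {π : ι → ℤ} (hπ : Function.Injective π)
    (hK : ∀ i j, 2 ≤ dist (π i) (π j) → K i j ≤ c * Real.log (dist (π i) (π j)) ^ (-ν))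
    {τ : ℝ} (hτ : 0 < τ) (i : ι) :
    {k | τ < K k i}.Finite ∧
      ({k | τ < K k i}.ncard : ℝ) ≤ 3 * Real.exp ((c / τ) ^ (1 / ν)) := by
  set R := Real.exp ((c / τ) ^ (1 / ν))
  have hmaps : Set.MapsTo π {k | τ < K k i} (Metric.closedBall (π i) R) := fun k hk =>
    dist_int_le_exp_of_lt_mul_log_rpow_neg hν hc hτ fun hd => hk.trans_le (hK k i hd)
  have hball : (Metric.closedBall (π i) R).Finite := (isCompact_closedBall _ _).finite_of_discrete
  refine ⟨hball.of_injOn hmaps hπ.injOn, ?_⟩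
  have hR : 1 ≤ R := Real.one_le_exp (by positivity)
  calc ({k | τ < K k i}.ncard : ℝ)
      ≤ (Metric.closedBall (π i) R).ncard :=
        mod_cast Set.ncard_le_ncard_of_injOn π hmaps hπ.injOn hball
    _ ≤ 2 * R + 1 := ncard_int_closedBall_le _ (Real.exp_pos _).le
    _ ≤ 3 * R := by linarith

/-- A Gaussian array with logarithmic covariance decay `|Cov(ε_p(i), ε_p(j))| ≤
c (log |π_p(i) - π_p(j)|)^{-ν}` (for `|π_p(i) - π_p(j)| ≥ 2`) is UDD, with UDD function
`N_ℰ(τ) = O(e^{(c/τ)^{1/ν}})` as `τ → 0`. -/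
theorem UDD_of_logarithmic_covariance_decay
    {Ω : Type*} [MeasureSpace Ω] [IsProbabilityMeasure (ℙ : Measure Ω)]
    (ε : (p : ℕ) → Fin p → Ω → ℝ)
    (hmeas : ∀ p i, Measurable (ε p i))
    (hGauss : ∀ p, IsJointGaussian (ε p))
    (hmarg : ∀ p i, Measure.map (ε p i) ℙ = gaussianReal 0 1)
    (ν c : ℝ) (hν : 0 < ν) (hc : 0 < c)
    (π : (p : ℕ) → Equiv.Perm (Fin p))
    (hcov : ∀ p : ℕ, ∀ i j : Fin p, i ≠ j →
      2 ≤ |((π p i : ℕ) : ℝ) - ((π p j : ℕ) : ℝ)| →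
      |covar (ε p i) (ε p j)| ≤
        c * (Real.log |((π p i : ℕ) : ℝ) - ((π p j : ℕ) : ℝ)|) ^ (-ν)) :
    (∀ τ : ℝ, 0 < τ → ∃ N : ℕ, ∀ p : ℕ, ∀ i : Fin p,
        Nat.card {k : Fin p | τ < covar (ε p k) (ε p i)} ≤ N) ∧
      ∃ C : ℝ, ∃ τ₀ : ℝ, 0 < τ₀ ∧
        ∀ τ : ℝ, 0 < τ → τ ≤ τ₀ → ∀ p : ℕ, ∀ i : Fin p,
          (Nat.card {k : Fin p | τ < covar (ε p k) (ε p i)} : ℝ) ≤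
            C * Real.exp ((c / τ) ^ (1 / ν)) := by
  have card_le (τ : ℝ) (hτ : 0 < τ) (p : ℕ) (i : Fin p) :
      (Nat.card {k : Fin p | τ < covar (ε p k) (ε p i)} : ℝ) ≤
        3 * Real.exp ((c / τ) ^ (1 / ν)) :=
    (UDD_of_logarithmic_covariance_decay_general (fun k j => covar (ε p k) (ε p j)) hν hc.le
      (Nat.cast_injective.comp (Fin.val_injective.comp (π p).injective))
      (fun k j hd => (le_abs_self _).trans
        (hcov p k j (by rintro rfl; norm_num at hd) hd)) hτ i).2
  exact ⟨fun τ hτ => ⟨_, fun p i => Nat.le_floor (card_le τ hτ p i)⟩,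
    3, 1, one_pos, fun τ hτ _ => card_le τ hτ⟩
end
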